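/- arXiv:0802.2550 — 2 statements merged into one kernel-verified Lean document; each statement's English description precedes it below -/
import Mathlib

section
/- For all integers n ≥ 1 and k with 2 ≤ k and k² ≤ 2^n, there exists a topological space on a set of n points having exactly k open sets. (Equivalently, T(n,k) > 0 for all k in [2, 2^{n/2}], i.e., f(n) > 2^{n/2}.) -/
/-!
Two operations on a topology with `n` points and `k` open sets each add one point: the disjoint
union with a point has `2 * k` open sets (`double_opens`), and adjoining a point whose only
neighbourhood is the whole space gives `k + 1` open sets (`succ_opens`).

Starting from the indiscrete topology (`k = 2`), the binary expansion of `k` is built up one digit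
at a time: `k = 2 * j` costs one point over `j`, and `k = 2 * j + 1` costs two. Since `k ≥ 2 * j`
gives `4 * j ^ 2 ≤ k ^ 2 ≤ 2 ^ n`, two points are always available.
-/

/-- The number `k` is the number of open sets of some topology on `n` points. -/
def HasOpens (n k : ℕ) : Prop :=
  ∃ t : TopologicalSpace (Fin n), Nat.card {s : Set (Fin n) // t.IsOpen s} = k

/-- The indiscrete topology on a nonempty set has two open sets. -/
lemma two_opens (n : ℕ) (hn : 1 ≤ n) : HasOpens n 2 := by
  have : Nonempty (Fin n) := ⟨⟨0, hn⟩⟩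
  refine ⟨⊤, ?_⟩
  have h : {s : Set (Fin n) | (⊤ : TopologicalSpace (Fin n)).IsOpen s} = {∅, Set.univ} := by
    ext s
    exact TopologicalSpace.isOpen_top_iff s
  change Nat.card ↥{s : Set (Fin n) | (⊤ : TopologicalSpace (Fin n)).IsOpen s} = 2
  rw [h, Nat.card_coe_set_eq, Set.ncard_pair Set.empty_ne_univ]

/-- Adding an isolated clopen point doubles the number of open sets: the topology coinduced along
`Fin.succ` puts no condition on whether `0` belongs to an open set. -/
lemma double_opens {n k : ℕ} (h : HasOpens n k) : HasOpens (n + 1) (2 * k) := by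
  obtain ⟨t, rfl⟩ := h
  refine ⟨t.coinduced Fin.succ, ?_⟩
  let e : {s : Set (Fin (n + 1)) // (t.coinduced Fin.succ).IsOpen s} ≃
      Prop × {s : Set (Fin n) // t.IsOpen s} :=
    { toFun := fun s => (0 ∈ s.1, ⟨Fin.succ ⁻¹' s.1, s.2⟩)
      invFun := fun p => ⟨{x | Fin.cases (motive := fun _ => Prop) p.1 (fun i => i ∈ p.2.1) x},
        p.2.2⟩
      left_inv := by
        rintro ⟨s, hs⟩
        apply Subtype.ext
        ext x
        refine Fin.cases ?_ (fun i => ?_) x <;> rfl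
      right_inv := by
        rintro ⟨p, u, hu⟩
        rfl }
  rw [Nat.card_congr e, Nat.card_prod]
  simp

/-- Adding a point whose only neighbourhood is the whole space adds one open set. -/
lemma succ_opens {n k : ℕ} (h : HasOpens n k) : HasOpens (n + 1) (k + 1) := by
  obtain ⟨t, rfl⟩ := h
  let t' : TopologicalSpace (Fin (n + 1)) :=
    { IsOpen := fun s => s = Set.univ ∨ (0 ∉ s ∧ t.IsOpen (Fin.succ ⁻¹' s))
      isOpen_univ := Or.inl rfl
      isOpen_inter := by
        rintro a b (rfl | ⟨ha, ha'⟩) (rfl | ⟨hb, hb'⟩)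
        · simp
        · simp [hb, hb']
        · simp [ha, ha']
        · exact Or.inr ⟨fun h => ha h.1, t.isOpen_inter _ _ ha' hb'⟩
      isOpen_sUnion := by
        intro S hS
        by_cases hu : Set.univ ∈ S
        · exact Or.inl (Set.eq_univ_of_univ_subset (Set.subset_sUnion_of_mem hu))
        · have hS' : ∀ s ∈ S, 0 ∉ s ∧ t.IsOpen (Fin.succ ⁻¹' s) := fun s hs =>
            (hS s hs).resolve_left (fun h => hu (h ▸ hs))
          refine Or.inr ⟨fun ⟨s, hs, h0⟩ => (hS' s hs).1 h0, ?_⟩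
          rw [Set.preimage_sUnion]
          exact isOpen_biUnion (fun s hs => (hS' s hs).2) }
  refine ⟨t', ?_⟩
  have h : {s | t'.IsOpen s} = insert Set.univ (Set.image Fin.succ '' {u | t.IsOpen u}) := by
    ext s
    constructor
    · rintro (h | ⟨h0, h⟩)
      · exact Or.inl h
      · refine Or.inr ⟨_, h, ?_⟩
        rw [Set.image_preimage_eq_iff, Fin.range_succ]
        rintro x hx rfl
        exact h0 hx
    · rintro (h | ⟨u, hu, rfl⟩)
      · exact Or.inl h
      · refine Or.inr ⟨?_, ?_⟩
        · rintro ⟨i, _, hi⟩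
          exact Fin.succ_ne_zero i hi
        · rwa [Set.preimage_image_eq _ (Fin.succ_injective n)]
  change Nat.card ↥{s | t'.IsOpen s} = Nat.card ↥{u | t.IsOpen u} + 1
  rw [h, Nat.card_coe_set_eq, Nat.card_coe_set_eq, Set.ncard_insert_of_notMem _ (Set.toFinite _),
    Set.ncard_image_of_injective _ (Set.image_injective.2 (Fin.succ_injective n))]
  rintro ⟨u, _, hu⟩
  obtain ⟨i, _, hi⟩ := hu.symm ▸ Set.mem_univ (0 : Fin (n + 1))
  exact Fin.succ_ne_zero i hi

lemma hasOpens_of_sq_le (k : ℕ) (hk : 2 ≤ k) :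
    ∀ n, 1 ≤ n → k ^ 2 ≤ 2 ^ n → HasOpens n k := by
  induction k using Nat.strong_induction_on with
  | _ k ih =>
    intro n hn hkn
    obtain rfl | hk2 := hk.eq_or_lt
    · exact two_opens n hn
    -- `k ≥ 3` forces `2 ^ n ≥ 9`, leaving room for two extra points.
    obtain ⟨m, rfl⟩ : ∃ m, n = m + 3 := by
      refine ⟨n - 3, (Nat.sub_add_cancel ?_).symm⟩
      by_contra! hlt
      interval_cases n <;> nlinarith
    have hpow : 2 ^ (m + 3) = 4 * 2 ^ (m + 1) := by ring
    have hpow' : 2 ^ (m + 2) = 2 * 2 ^ (m + 1) := by ring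
    obtain ⟨j, rfl | rfl⟩ := Nat.even_or_odd' k
    · exact double_opens (ih j (by omega) (by omega) (m + 2) (by omega) (by nlinarith))
    · obtain hj | hj := Nat.lt_or_ge j 2
      · obtain rfl : j = 1 := by omega
        exact succ_opens (two_opens (m + 2) (by omega))
      · exact succ_opens (double_opens (ih j (by omega) hj (m + 1) (by omega) (by nlinarith)))

/-- For all integers `n ≥ 1` and `k` with `2 ≤ k` and `k ^ 2 ≤ 2 ^ n`,
there exists a topology on a set of `n` points having exactly `k` open sets. -/
theorem T_pos_singles (n k : ℕ) (hn : 1 ≤ n) (hk : 2 ≤ k) (hkn : k ^ 2 ≤ 2 ^ n) :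
    ∃ t : TopologicalSpace (Fin n), Nat.card {s : Set (Fin n) // t.IsOpen s} = k :=
  hasOpens_of_sq_le k hk n hn hkn
end

section
/- For every integer k ≥ 2, there exists a natural number n with 2·n ≤ 3·⌊log₂ k⌋ + 2 and a topological space on a set of n points having exactly k open sets. (Equivalently, m(k) ≤ (3/2)·⌊log₂ k⌋ + 1.) -/
/-!
The number of open sets grows in a controlled way when one point is added. Given a topology on
`Fin n` and any set `C`, adjoin a point `0` whose open neighbourhoods must contain `C` (`addPoint`).
The open sets of the new space avoiding `0` correspond to the old open sets, and those containing
`0` to the old open sets that contain `C`. Hence `C = ∅` doubles the number of open sets,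
`C = univ` adds `1`, and a set `C` with exactly three open supersets adds `3`.

Write `k = 4 * q + r` with `r < 4`. Starting from a space with `q` open sets, the cases `r = 0, 1, 2`
take at most three new points by doubling twice and adding `1` at the right moment. For `r = 3`
three points also suffice (double, double, add `3`) if the space has a set with exactly three open
supersets (`Realizes3`). This property survives doubling and adding `3`, and it holds after every
step `k ↦ 2 * k + 1`. By induction it can be assumed for every `k` which is not a power of two
(`pow_or_realizes3`); powers of two are sizes of discrete spaces, which use so few points that
the four-point step to `4 * q + 3` is affordable when `q` is a power of two.
-/

/-- The number of open sets containing `D`. -/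
noncomputable def numAbove {n : ℕ} (t : TopologicalSpace (Fin n)) (D : Set (Fin n)) : ℕ :=
  {s : Set (Fin n) | t.IsOpen s ∧ D ⊆ s}.ncard

/-- The space obtained by adjoining the point `0`, the old points being shifted by `Fin.succ`;
an open set may contain `0` only if it contains (the shift of) `C`. -/
@[reducible]
def addPoint {n : ℕ} (t : TopologicalSpace (Fin n)) (C : Set (Fin n)) :
    TopologicalSpace (Fin (n + 1)) where
  IsOpen U := t.IsOpen (Fin.succ ⁻¹' U) ∧ (0 ∈ U → C ⊆ Fin.succ ⁻¹' U)
  isOpen_univ := ⟨t.isOpen_univ, fun _ => Set.subset_univ _⟩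
  isOpen_inter U V hU hV :=
    ⟨t.isOpen_inter _ _ hU.1 hV.1, fun h => Set.subset_inter (hU.2 h.1) (hV.2 h.2)⟩
  isOpen_sUnion S hS := by
    constructor
    · rw [Set.preimage_sUnion, ← Set.sUnion_image]
      apply t.isOpen_sUnion
      rintro _ ⟨U, hU, rfl⟩
      exact (hS U hU).1
    · rintro ⟨U, hU, h0⟩ x hx
      exact ⟨U, hU, (hS U hU).2 h0 hx⟩

lemma succ_preimage_insert_zero {n : ℕ} (s : Set (Fin n)) :
    Fin.succ ⁻¹' (insert 0 (Fin.succ '' s)) = s := by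
  ext x; simp

lemma succ_preimage_image {n : ℕ} (s : Set (Fin n)) :
    Fin.succ ⁻¹' (Fin.succ '' s) = s :=
  Set.preimage_image_eq _ (Fin.succ_injective n)

lemma insert_zero_image_preimage {n : ℕ} {S : Set (Fin (n + 1))} (h : 0 ∈ S) :
    insert 0 (Fin.succ '' (Fin.succ ⁻¹' S)) = S := by
  ext x
  cases x using Fin.cases <;> simp [h]

lemma image_preimage_of_zero_notMem {n : ℕ} {S : Set (Fin (n + 1))} (h : 0 ∉ S) :
    Fin.succ '' (Fin.succ ⁻¹' S) = S := by
  ext x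
  cases x using Fin.cases <;> simp [h]

lemma insert_zero_image_injective {n : ℕ} :
    Function.Injective (fun s : Set (Fin n) => insert 0 (Fin.succ '' s)) :=
  Function.LeftInverse.injective (g := fun S => Fin.succ ⁻¹' S) succ_preimage_insert_zero

lemma setOf_above_insert {n : ℕ} (t : TopologicalSpace (Fin n)) (C D : Set (Fin n)) :
    {S | (addPoint t C).IsOpen S ∧ insert 0 (Fin.succ '' D) ⊆ S} =
      (fun s : Set (Fin n) => insert 0 (Fin.succ '' s)) '' {s | t.IsOpen s ∧ C ∪ D ⊆ s} := by
  ext S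
  constructor
  · rintro ⟨⟨h1, h2⟩, h3⟩
    have h0 : (0 : Fin (n + 1)) ∈ S := h3 (Set.mem_insert _ _)
    refine ⟨Fin.succ ⁻¹' S, ⟨h1, Set.union_subset (h2 h0) ?_⟩, insert_zero_image_preimage h0⟩
    exact fun x hx => h3 (Or.inr ⟨x, hx, rfl⟩)
  · rintro ⟨s, ⟨h1, h2⟩, rfl⟩
    refine ⟨⟨?_, fun _ => ?_⟩, ?_⟩
    · simpa only [succ_preimage_insert_zero] using h1
    · simpa only [succ_preimage_insert_zero] using Set.subset_union_left.trans h2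
    · exact Set.insert_subset_insert (Set.image_mono (Set.subset_union_right.trans h2))

lemma numAbove_insert {n : ℕ} (t : TopologicalSpace (Fin n)) (C D : Set (Fin n)) :
    numAbove (addPoint t C) (insert 0 (Fin.succ '' D)) = numAbove t (C ∪ D) := by
  rw [numAbove, setOf_above_insert, Set.ncard_image_of_injective _ insert_zero_image_injective]
  rfl

/-- The open supersets of an old set split according to whether they contain the new point. -/
lemma numAbove_image {n : ℕ} (t : TopologicalSpace (Fin n)) (C D : Set (Fin n)) :
    numAbove (addPoint t C) (Fin.succ '' D) = numAbove t D + numAbove t (C ∪ D) := by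
  have hsplit : {S | (addPoint t C).IsOpen S ∧ Fin.succ '' D ⊆ S} =
      (fun s : Set (Fin n) => Fin.succ '' s) '' {s | t.IsOpen s ∧ D ⊆ s} ∪
        {S | (addPoint t C).IsOpen S ∧ insert 0 (Fin.succ '' D) ⊆ S} := by
    ext S
    constructor
    · rintro ⟨h1, h2⟩
      by_cases h0 : (0 : Fin (n + 1)) ∈ S
      · exact Or.inr ⟨h1, Set.insert_subset h0 h2⟩
      · exact Or.inl ⟨Fin.succ ⁻¹' S, ⟨h1.1, Set.image_subset_iff.mp h2⟩,
          image_preimage_of_zero_notMem h0⟩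
    · rintro (⟨s, ⟨h1, h2⟩, rfl⟩ | ⟨h1, h2⟩)
      · refine ⟨⟨?_, fun h => ?_⟩, Set.image_mono h2⟩
        · simpa only [succ_preimage_image] using h1
        · obtain ⟨x, -, hx⟩ := h
          exact absurd hx (Fin.succ_ne_zero x)
      · exact ⟨h1, (Set.subset_insert _ _).trans h2⟩
  have hdisj : Disjoint ((fun s : Set (Fin n) => Fin.succ '' s) '' {s | t.IsOpen s ∧ D ⊆ s})
      {S | (addPoint t C).IsOpen S ∧ insert 0 (Fin.succ '' D) ⊆ S} := by
    rw [Set.disjoint_left]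
    rintro _ ⟨s, -, rfl⟩ ⟨-, h⟩
    obtain ⟨x, -, hx⟩ := h (Set.mem_insert _ _)
    exact Fin.succ_ne_zero x hx
  rw [numAbove, hsplit, Set.ncard_union_eq hdisj (Set.toFinite _) (Set.toFinite _),
    Set.ncard_image_of_injective _ (Set.image_injective.mpr (Fin.succ_injective n)),
    ← numAbove_insert]
  rfl

lemma numAbove_univ {n : ℕ} (t : TopologicalSpace (Fin n)) : numAbove t Set.univ = 1 := by
  rw [numAbove, Set.ncard_eq_one]
  refine ⟨Set.univ, Set.ext fun s => ?_⟩
  simp only [Set.mem_ofPred_eq, Set.univ_subset_iff, Set.mem_singleton_iff]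
  exact ⟨fun h => h.2, fun h => ⟨h ▸ t.isOpen_univ, h⟩⟩

lemma numAbove_addPoint_empty {n : ℕ} (t : TopologicalSpace (Fin n)) (C : Set (Fin n)) :
    numAbove (addPoint t C) ∅ = numAbove t ∅ + numAbove t C := by
  simpa using numAbove_image t C ∅

/-- Some topology on `n` points has exactly `k` open sets. -/
def Realizes (n k : ℕ) : Prop :=
  ∃ t : TopologicalSpace (Fin n), numAbove t ∅ = k

/-- Some topology on `n` points has exactly `k` open sets and admits a set with exactly three
open supersets. -/
def Realizes3 (n k : ℕ) : Prop :=
  ∃ t : TopologicalSpace (Fin n), numAbove t ∅ = k ∧ ∃ D, numAbove t D = 3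

lemma Realizes3.realizes {n k : ℕ} : Realizes3 n k → Realizes n k :=
  fun ⟨t, h, _⟩ => ⟨t, h⟩

lemma realizes_zero_one : Realizes 0 1 :=
  ⟨⊤, by rw [← Set.univ_eq_empty_iff.mpr (inferInstanceAs (IsEmpty (Fin 0))), numAbove_univ]⟩

lemma Realizes.double {n k : ℕ} : Realizes n k → Realizes (n + 1) (2 * k) := by
  rintro ⟨t, rfl⟩
  exact ⟨addPoint t ∅, by rw [numAbove_addPoint_empty, two_mul]⟩

lemma Realizes3.double {n k : ℕ} : Realizes3 n k → Realizes3 (n + 1) (2 * k) := by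
  rintro ⟨t, rfl, D, hD⟩
  refine ⟨addPoint t ∅, by rw [numAbove_addPoint_empty, two_mul], insert 0 (Fin.succ '' D), ?_⟩
  rw [numAbove_insert, Set.empty_union, hD]

lemma Realizes3.add_three {n k : ℕ} : Realizes3 n k → Realizes3 (n + 1) (k + 3) := by
  rintro ⟨t, rfl, D, hD⟩
  refine ⟨addPoint t D, by rw [numAbove_addPoint_empty, hD], insert 0 (Fin.succ '' D), ?_⟩
  rw [numAbove_insert, Set.union_self, hD]

/-- After doubling and adding `1`, the set of all original points has exactly three open
supersets: one for each of the three ways the two new points may occur. -/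
lemma Realizes.double_add_one {n k : ℕ} : Realizes n k → Realizes3 (n + 2) (2 * k + 1) := by
  rintro ⟨t, rfl⟩
  refine ⟨addPoint (addPoint t ∅) Set.univ, ?_, Fin.succ '' (Fin.succ '' Set.univ), ?_⟩
  · rw [numAbove_addPoint_empty, numAbove_addPoint_empty, numAbove_univ, two_mul]
  · rw [numAbove_image, numAbove_image, Set.univ_union, Set.empty_union, numAbove_univ,
      numAbove_univ]

lemma realizes_two_pow (L : ℕ) : Realizes L (2 ^ L) := by
  induction L with
  | zero => exact realizes_zero_one
  | succ L ih => rw [pow_succ']; exact ih.double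

lemma log_four_mul_add {q r : ℕ} (hq : 1 ≤ q) (hr : r < 4) :
    Nat.log 2 (4 * q + r) = Nat.log 2 q + 2 := by
  have h1 : (4 * q + r) / 2 / 2 = q := by omega
  rw [Nat.log_of_one_lt_of_le one_lt_two (by omega : 2 ≤ 4 * q + r),
    Nat.log_of_one_lt_of_le one_lt_two (by omega : 2 ≤ (4 * q + r) / 2), h1]

lemma pow_or_realizes3 (k : ℕ) (hk : 1 ≤ k) :
    (∃ L, k = 2 ^ L) ∨ ∃ n, 2 * n ≤ 3 * Nat.log 2 k + 2 ∧ Realizes3 n k := by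
  induction k using Nat.strong_induction_on with
  | _ k ih =>
  rcases Nat.lt_or_ge k 4 with h4 | h4
  · interval_cases k
    · exact Or.inl ⟨0, rfl⟩
    · exact Or.inl ⟨1, rfl⟩
    · refine Or.inr ⟨2, ?_, realizes_zero_one.double_add_one⟩
      have : 1 ≤ Nat.log 2 3 := Nat.le_log_of_pow_le one_lt_two (by norm_num)
      omega
  · obtain ⟨q, r, hr, rfl⟩ : ∃ q r, r < 4 ∧ k = 4 * q + r :=
      ⟨k / 4, k % 4, Nat.mod_lt _ (by norm_num), (Nat.div_add_mod k 4).symm⟩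
    have hq : 1 ≤ q := by omega
    rw [log_four_mul_add hq hr]
    rcases ih q (by omega) hq with ⟨L, rfl⟩ | ⟨n, hn, h⟩
    · have h := realizes_two_pow L
      rw [Nat.log_pow one_lt_two]
      interval_cases r
      · exact Or.inl ⟨L + 2, by ring⟩
      · exact Or.inr ⟨L + 3, by omega, by convert h.double.double_add_one using 1; ring⟩
      · exact Or.inr ⟨L + 3, by omega, by convert h.double_add_one.double using 1; ring⟩
      · refine Or.inr ⟨L + 4, by omega, ?_⟩
        convert h.double_add_one.realizes.double_add_one using 1; ring
    · right
      interval_cases r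
      · exact ⟨n + 2, by omega, by convert h.double.double using 1; ring⟩
      · exact ⟨n + 3, by omega, by convert h.realizes.double.double_add_one using 1; ring⟩
      · exact ⟨n + 3, by omega, by convert h.realizes.double_add_one.double using 1; ring⟩
      · exact ⟨n + 3, by omega, by convert h.double.double.add_three using 1; ring⟩

/-- For every integer `k ≥ 2`, there exists a natural number `n` with
`2 * n ≤ 3 * ⌊log₂ k⌋ + 2` and a topology on a set of `n` points having
exactly `k` open sets. -/
theorem m_le_three_halves_log (k : ℕ) (hk : 2 ≤ k) :
    ∃ n : ℕ, 2 * n ≤ 3 * Nat.log 2 k + 2 ∧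
      ∃ t : TopologicalSpace (Fin n), Nat.card {s : Set (Fin n) // t.IsOpen s} = k := by
  have key : ∃ n : ℕ, 2 * n ≤ 3 * Nat.log 2 k + 2 ∧ Realizes n k := by
    rcases pow_or_realizes3 k (by omega) with ⟨L, rfl⟩ | ⟨n, hn, h⟩
    · exact ⟨L, by rw [Nat.log_pow one_lt_two]; omega, realizes_two_pow L⟩
    · exact ⟨n, hn, h.realizes⟩
  obtain ⟨n, hn, t, ht⟩ := key
  refine ⟨n, hn, t, ?_⟩
  rw [← ht, numAbove]
  simp only [Set.empty_subset, and_true]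
  rfl
end
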